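/- For every integer a ≥ 3 and every integer t ≥ 2a³ + 2a² + 1, we have φ(t) ≥ a. -/

import Mathlib

open Finset Matrix

/-- The sign `[T : e]` of an edge `e` in a triangle `T`. -/
noncomputable def triSign (T e : Finset ℕ) : ℝ :=
  if e ⊆ T ∧ e.card = 2 ∧ T.card = 3 then
    if (T \ e).max = T.max ∨ (T \ e).min = T.min then 1 else -1
  else 0

/-- A triangle family: a nonempty finite set of 3-element subsets of ℕ. -/
def IsTriFam (F : Finset (Finset ℕ)) : Prop :=
  F.Nonempty ∧ ∀ T ∈ F, T.card = 3

/-- The edges of the support graph of a triangle family. -/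
def edgesOf (F : Finset (Finset ℕ)) : Finset (Finset ℕ) :=
  F.biUnion fun T => T.powersetCard 2

/-- The vertices of the support graph of a triangle family. -/
def vertsOf (F : Finset (Finset ℕ)) : Finset ℕ :=
  F.biUnion id

/-- The signed edge-triangle incidence matrix of a triangle family. -/
noncomputable def delta1 (F : Finset (Finset ℕ)) :
    Matrix {T // T ∈ F} {e // e ∈ edgesOf F} ℝ :=
  Matrix.of fun T e => triSign T.1 e.1

/-- The smallest positive eigenvalue of a matrix. -/
noncomputable def lambdaMinPos {m : Type*} [Fintype m] (M : Matrix m m ℝ) : ℝ :=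
  sInf {μ : ℝ | 0 < μ ∧ ∃ v : m → ℝ, v ≠ 0 ∧ M.mulVec v = μ • v}

/-- `λ(𝒯)`: the smallest positive eigenvalue of `δ₁(𝒯)ᵀ δ₁(𝒯)`. -/
noncomputable def lam (F : Finset (Finset ℕ)) : ℝ :=
  lambdaMinPos ((delta1 F)ᵀ * delta1 F)

/-- The neighborhood of `x` in the support graph `Γ₀(F)`. -/
def nbrs (F : Finset (Finset ℕ)) (x : ℕ) : Finset ℕ :=
  (vertsOf F).filter fun y => x ≠ y ∧ ∃ T ∈ F, x ∈ T ∧ y ∈ T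

/-- `φ(t)`: the maximum of `λ(𝒯)` over triangle families with `|𝒯| = t`. -/
noncomputable def phi (t : ℕ) : ℝ :=
  sSup {r : ℝ | ∃ F : Finset (Finset ℕ), IsTriFam F ∧ F.card = t ∧ lam F = r}

/-- `Λ(t) = max_{1 ≤ s ≤ t} φ(s)`. -/
noncomputable def Lam (t : ℕ) : ℝ :=
  sSup {r : ℝ | ∃ s : ℕ, 1 ≤ s ∧ s ≤ t ∧ phi s = r}

/-- `H(n) = min{ s ≥ 1 : φ(C(n,3)+s) > n - 1 }`. -/
noncomputable def Hfun (n : ℕ) : ℕ :=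
  sInf {s : ℕ | 1 ≤ s ∧ (n : ℝ) - 1 < phi (n.choose 3 + s)}

/-- The triangle family `𝒯_{c,b}`: all 3-cliques of `K_c ∨ (b isolated vertices)`. -/
def Tcb (c b : ℕ) : Finset (Finset ℕ) :=
  ((Finset.Icc 1 c).powersetCard 3) ∪
    (Finset.Icc (c+1) (c+b)).biUnion
      (fun i => ((Finset.Icc 1 c).powersetCard 2).image (fun p => insert i p))

/-- coboundary of an edge function on a triangle -/
noncomputable def dT (V : Finset ℕ → ℝ) (T : Finset ℕ) : ℝ :=
  ∑ e ∈ T.powersetCard 2, triSign T e * V e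

/-- alternating version of an edge function -/
noncomputable def alt (V : Finset ℕ → ℝ) (x y : ℕ) : ℝ :=
  if x < y then V {x, y} else if y < x then - V {x, y} else 0

lemma alt_anti (V : Finset ℕ → ℝ) (x y : ℕ) : alt V x y = - alt V y x := by
  unfold alt
  rcases lt_trichotomy x y with h | h | h
  · simp [h, h.not_gt, Finset.pair_comm]
  · simp [h]
  · simp [h, h.not_gt, Finset.pair_comm]

lemma alt_sq (V : Finset ℕ → ℝ) (x y : ℕ) (hxy : x ≠ y) : (alt V x y) ^ 2 = V {x, y} ^ 2 := by
  unfold alt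
  rcases lt_trichotomy x y with h | h | h
  · simp [h]
  · exact absurd h hxy
  · simp [h, h.not_gt]

lemma psc_three (a b c : ℕ) (hab : a < b) (hbc : b < c) :
    ({a, b, c} : Finset ℕ).powersetCard 2 = {{a, b}, {a, c}, {b, c}} := by
  have hac := hab.trans hbc
  symm
  apply Finset.eq_of_subset_of_card_le
  · intro e he
    simp only [mem_insert, mem_singleton] at he
    rw [mem_powersetCard]
    rcases he with rfl | rfl | rfl
    · exact ⟨by intro; simp; tauto, Finset.card_pair hab.ne⟩
    · exact ⟨by intro; simp; tauto, Finset.card_pair hac.ne⟩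
    · exact ⟨by intro; simp; tauto, Finset.card_pair hbc.ne⟩
  · rw [card_powersetCard]
    have h3 : ({a, b, c} : Finset ℕ).card = 3 := by
      rw [Finset.card_eq_three]; exact ⟨a, b, c, hab.ne, hac.ne, hbc.ne, rfl⟩
    have : ({{a, b}, {a, c}, {b, c}} : Finset (Finset ℕ)).card = 3 := by
      rw [Finset.card_eq_three]
      refine ⟨_, _, _, ?_, ?_, ?_, rfl⟩
      · intro h
        have : b ∈ ({a, c} : Finset ℕ) := h ▸ (by simp)
        simp at this; omega
      · intro h
        have : a ∈ ({b, c} : Finset ℕ) := h ▸ (by simp)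
        simp at this; omega
      · intro h
        have : a ∈ ({b, c} : Finset ℕ) := h ▸ (by simp)
        simp at this; omega
    rw [h3, this]; decide

lemma dT_sorted (V : Finset ℕ → ℝ) (a b c : ℕ) (hab : a < b) (hbc : b < c) :
    dT V {a, b, c} = V {a, b} - V {a, c} + V {b, c} := by
  have hac := hab.trans hbc
  have h3 : ({a, b, c} : Finset ℕ).card = 3 := by
    rw [Finset.card_eq_three]; exact ⟨a, b, c, hab.ne, hac.ne, hbc.ne, rfl⟩
  have s1 : ({a, b, c} : Finset ℕ) \ {a, b} = {c} := by ext x; simp; omega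
  have s2 : ({a, b, c} : Finset ℕ) \ {a, c} = {b} := by ext x; simp; omega
  have s3 : ({a, b, c} : Finset ℕ) \ {b, c} = {a} := by ext x; simp; omega
  have m1 : ({a, b, c} : Finset ℕ).max = WithBot.some c := by
    simp only [Finset.max_insert, Finset.max_singleton]
    rw [← WithBot.coe_max, ← WithBot.coe_max, max_eq_right hbc.le, max_eq_right hac.le]
  have m2 : ({a, b, c} : Finset ℕ).min = WithTop.some a := by
    simp only [Finset.min_insert, Finset.min_singleton]
    rw [← WithTop.coe_min, ← WithTop.coe_min, min_eq_left hbc.le, min_eq_left hab.le]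
  have t1 : triSign {a, b, c} {a, b} = 1 := by
    unfold triSign
    rw [if_pos ⟨by intro; simp; tauto, Finset.card_pair hab.ne, h3⟩, s1, m1, if_pos]
    left; rfl
  have t2 : triSign {a, b, c} {a, c} = -1 := by
    unfold triSign
    rw [if_pos ⟨by intro; simp; tauto, Finset.card_pair hac.ne, h3⟩, s2, m1, m2, if_neg]
    rintro (h | h)
    · exact hbc.ne (WithBot.coe_injective h)
    · exact hab.ne' (WithTop.coe_injective h)
  have t3 : triSign {a, b, c} {b, c} = 1 := by
    unfold triSign
    rw [if_pos ⟨by intro; simp; tauto, Finset.card_pair hbc.ne, h3⟩, s3, m2, if_pos]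
    right; rfl
  unfold dT
  rw [psc_three a b c hab hbc, sum_insert, sum_insert, sum_singleton, t1, t2, t3]
  · ring
  · intro h
    rw [mem_singleton] at h
    have : a ∈ ({b, c} : Finset ℕ) := h ▸ (by simp)
    simp at this; omega
  · intro h
    rw [mem_insert, mem_singleton] at h
    rcases h with h | h
    · have : b ∈ ({a, c} : Finset ℕ) := h ▸ (by simp)
      simp at this; omega
    · have : a ∈ ({b, c} : Finset ℕ) := h ▸ (by simp)
      simp at this; omega

lemma exists_sorted (T : Finset ℕ) (hT : T.card = 3) :
    ∃ a b c, a < b ∧ b < c ∧ T = {a, b, c} := by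
  obtain ⟨x, y, z, hxy, hxz, hyz, rfl⟩ := Finset.card_eq_three.1 hT
  rcases lt_or_gt_of_ne hxy with h1 | h1 <;> rcases lt_or_gt_of_ne hxz with h2 | h2 <;>
    rcases lt_or_gt_of_ne hyz with h3 | h3
  · exact ⟨x, y, z, h1, h3, rfl⟩
  · exact ⟨x, z, y, h2, h3, by ext; simp; tauto⟩
  · omega
  · exact ⟨z, x, y, h2, h1, by ext; simp; tauto⟩
  · exact ⟨y, x, z, h1, h2, by ext; simp; tauto⟩
  · omega
  · exact ⟨y, z, x, h3, h2, by ext; simp; tauto⟩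
  · exact ⟨z, y, x, h3, h1, by ext; simp; tauto⟩

lemma dT_alt_sorted (V : Finset ℕ → ℝ) (a b c : ℕ) (hab : a < b) (hbc : b < c) :
    dT V {a, b, c} = alt V a b + alt V b c + alt V c a := by
  have hac := hab.trans hbc
  rw [dT_sorted V a b c hab hbc, alt_anti V c a]
  unfold alt
  rw [if_pos hab, if_pos hbc, if_pos hac]; ring

lemma dT_sq (V : Finset ℕ → ℝ) (x y z : ℕ) (hxy : x ≠ y) (hxz : x ≠ z) (hyz : y ≠ z) :
    (dT V {x, y, z}) ^ 2 = (alt V x y + alt V y z + alt V z x) ^ 2 := by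
  have e1 := alt_anti V x y
  have e2 := alt_anti V y z
  have e3 := alt_anti V z x
  rcases lt_or_gt_of_ne hxy with h1 | h1 <;> rcases lt_or_gt_of_ne hxz with h2 | h2 <;>
    rcases lt_or_gt_of_ne hyz with h3 | h3
  · rw [dT_alt_sorted V x y z h1 h3]
  · rw [show ({x, y, z} : Finset ℕ) = {x, z, y} by ext; simp; tauto,
      dT_alt_sorted V x z y h2 h3, e1, e2, e3]; ring
  · omega
  · rw [show ({x, y, z} : Finset ℕ) = {z, x, y} by ext; simp; tauto,
      dT_alt_sorted V z x y h2 h1]; ring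
  · rw [show ({x, y, z} : Finset ℕ) = {y, x, z} by ext; simp; tauto,
      dT_alt_sorted V y x z h1 h2, e1, e2, e3]; ring
  · omega
  · rw [show ({x, y, z} : Finset ℕ) = {y, z, x} by ext; simp; tauto,
      dT_alt_sorted V y z x h3 h2]; ring
  · rw [show ({x, y, z} : Finset ℕ) = {z, y, x} by ext; simp; tauto,
      dT_alt_sorted V z y x h3 h1, e1, e2, e3]; ring

lemma dT_exact (ψ : ℕ → ℝ) (U : Finset ℕ → ℝ) (hU : ∀ x y, x < y → U {x, y} = ψ y - ψ x)
    (T : Finset ℕ) (hT : T.card = 3) : dT U T = 0 := by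
  obtain ⟨a, b, c, hab, hbc, rfl⟩ := exists_sorted T hT
  rw [dT_sorted U a b c hab hbc, hU _ _ hab, hU _ _ hbc, hU _ _ (hab.trans hbc)]; ring

lemma delta_mulVec (F : Finset (Finset ℕ)) (U : Finset ℕ → ℝ) (T : {T // T ∈ F}) :
    (delta1 F *ᵥ (fun e => U e.1)) T = dT U T.1 := by
  unfold dT
  simp only [Matrix.mulVec, dotProduct, delta1, Matrix.of_apply]
  rw [Finset.sum_coe_sort (edgesOf F) (fun e => triSign T.1 e * U e)]
  symm
  apply Finset.sum_subset
  · intro e he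
    exact mem_biUnion.2 ⟨T.1, T.2, he⟩
  · intro e _ he
    have : triSign T.1 e = 0 := by
      unfold triSign
      rw [if_neg]
      intro h
      exact he (mem_powersetCard.2 ⟨h.1, h.2.1⟩)
    rw [this, zero_mul]

lemma energy (F : Finset (Finset ℕ)) (U V : Finset ℕ → ℝ) (μ : ℝ)
    (hV : ((delta1 F)ᵀ * delta1 F).mulVec (fun e => V e.1) = μ • (fun e => V e.1)) :
    μ * ∑ e ∈ edgesOf F, U e * V e = ∑ T ∈ F, dT U T * dT V T := by
  have h1 : (fun e : {e // e ∈ edgesOf F} => U e.1) ⬝ᵥ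
      (((delta1 F)ᵀ * delta1 F).mulVec (fun e => V e.1)) =
      (delta1 F *ᵥ (fun e => U e.1)) ⬝ᵥ (delta1 F *ᵥ (fun e => V e.1)) := by
    rw [← Matrix.mulVec_mulVec, Matrix.dotProduct_mulVec, Matrix.vecMul_transpose]
  rw [hV] at h1
  simp only [dotProduct, delta_mulVec, Pi.smul_apply, smul_eq_mul] at h1
  rw [Finset.sum_coe_sort F (fun T => dT U T * dT V T),
    Finset.sum_coe_sort (edgesOf F) (fun e => U e * (μ * V e))] at h1
  rw [← h1, Finset.mul_sum]
  exact Finset.sum_congr rfl fun e _ => by ring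

lemma sum2 (C : Finset ℕ) (k : ℕ → ℕ → ℝ) (G : Finset ℕ → ℝ) (hs : ∀ x y, k x y = k y x)
    (h0 : ∀ x, k x x = 0) (hG : ∀ x ∈ C, ∀ y ∈ C, x ≠ y → G {x, y} = k x y) :
    ∑ x ∈ C, ∑ y ∈ C, k x y = 2 * ∑ p ∈ C.powersetCard 2, G p := by
  induction C using Finset.induction_on with
  | empty => simp [Finset.powersetCard_eq_empty.2 (show (∅ : Finset ℕ).card < 2 by simp)]
  | insert x C hx ih =>
    have ih' := ih fun u hu w hw => hG u (mem_insert_of_mem hu) w (mem_insert_of_mem hw)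
    rw [powersetCard_succ_insert hx, sum_union, sum_image]
    · have : ∑ p ∈ C.powersetCard 1, G (insert x p) = ∑ y ∈ C, k x y := by
        rw [powersetCard_one, sum_map]
        refine sum_congr rfl fun y hy => ?_
        exact hG x (mem_insert_self _ _) y (mem_insert_of_mem hy) (by rintro rfl; exact hx hy)
      rw [this, mul_add, ← ih', sum_insert hx, sum_insert hx]
      simp only [sum_insert hx, sum_add_distrib, h0, fun y => hs y x]
      ring
    · intro p hp q hq h
      have hp' : x ∉ p := fun h => hx ((mem_powersetCard.1 hp).1 h)
      have hq' : x ∉ q := fun h => hx ((mem_powersetCard.1 hq).1 h)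
      rw [← erase_insert hp', ← erase_insert hq', h]
    · rw [disjoint_left]
      intro p hp hq
      obtain ⟨q, _, rfl⟩ := mem_image.1 hq
      exact hx ((mem_powersetCard.1 hp).1 (mem_insert_self _ _))

lemma sum3 (C : Finset ℕ) (k : ℕ → ℕ → ℕ → ℝ) (G : Finset ℕ → ℝ)
    (hs : ∀ x y z, k x y z = k y x z) (hc : ∀ x y z, k x y z = k y z x)
    (h0 : ∀ x y, k x x y = 0)
    (hG : ∀ x ∈ C, ∀ y ∈ C, ∀ z ∈ C, x ≠ y → x ≠ z → y ≠ z → G {x, y, z} = k x y z) :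
    ∑ x ∈ C, ∑ y ∈ C, ∑ z ∈ C, k x y z = 6 * ∑ p ∈ C.powersetCard 3, G p := by
  induction C using Finset.induction_on with
  | empty => simp [Finset.powersetCard_eq_empty.2 (show (∅ : Finset ℕ).card < 3 by simp)]
  | insert x C hx ih =>
    have ih' := ih fun u hu w hw v hv =>
      hG u (mem_insert_of_mem hu) w (mem_insert_of_mem hw) v (mem_insert_of_mem hv)
    rw [powersetCard_succ_insert hx, sum_union, sum_image]
    · have : ∑ y ∈ C, ∑ z ∈ C, k x y z = 2 * ∑ p ∈ C.powersetCard 2, G (insert x p) := by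
        apply sum2
        · intro y z; rw [hc, hc, hs]
        · intro y; rw [hc, h0]
        · intro y hy z hz hyz
          exact hG x (mem_insert_self _ _) y (mem_insert_of_mem hy) z (mem_insert_of_mem hz)
            (by rintro rfl; exact hx hy) (by rintro rfl; exact hx hz) hyz
      rw [mul_add, ← ih']
      have e1 : ∀ y z, k y x z = k x y z := fun y z => hs _ _ _
      have e2 : ∀ y z, k y z x = k x y z := fun y z => by rw [hc x y z]
      rw [sum_insert hx]
      simp only [sum_insert hx, sum_add_distrib, h0, e1, e2, sum_const_zero]
      linarith
    · intro p hp q hq h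
      have hp' : x ∉ p := fun h => hx ((mem_powersetCard.1 hp).1 h)
      have hq' : x ∉ q := fun h => hx ((mem_powersetCard.1 hq).1 h)
      rw [← erase_insert hp', ← erase_insert hq', h]
    · rw [disjoint_left]
      intro p hp hq
      obtain ⟨q, _, rfl⟩ := mem_image.1 hq
      exact hx ((mem_powersetCard.1 hp).1 (mem_insert_self _ _))

lemma core (C B : Finset ℕ) (f : ℕ → ℕ → ℝ) (hf : ∀ x y, f x y = - f y x)
    (hB : ∀ i ∈ B, ∑ u ∈ C, f i u = 0)
    (hC : ∀ u ∈ C, ∑ w ∈ C, f u w + ∑ i ∈ B, f u i = 0) :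
    (C.card : ℝ) * ((∑ u ∈ C, ∑ w ∈ C, f u w ^ 2) / 2 + ∑ i ∈ B, ∑ u ∈ C, f i u ^ 2) ≤
      (∑ x ∈ C, ∑ y ∈ C, ∑ z ∈ C, (f x y + f y z + f z x) ^ 2) / 6 +
      ∑ i ∈ B, (∑ u ∈ C, ∑ w ∈ C, (f i u + f u w + f w i) ^ 2) / 2 := by
  set S := ∑ u ∈ C, ∑ w ∈ C, f u w ^ 2 with hS
  set d : ℕ → ℝ := fun u => ∑ w ∈ C, f u w with hd
  have hd' : ∀ u, ∑ w ∈ C, f w u = - d u := fun u => by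
    rw [hd]; simp only; rw [← sum_neg_distrib]; exact sum_congr rfl fun w _ => hf _ _
  have hSc : ∑ u ∈ C, ∑ w ∈ C, f w u ^ 2 = S := by rw [hS, sum_comm]
  have hS0 : 0 ≤ S := sum_nonneg fun _ _ => sum_nonneg fun _ _ => sq_nonneg _
  have h3 : ∑ x ∈ C, ∑ y ∈ C, ∑ z ∈ C, (f x y + f y z + f z x) ^ 2 =
      3 * C.card * S - 6 * ∑ u ∈ C, d u ^ 2 := by
    have e : ∀ x y z, (f x y + f y z + f z x) ^ 2 = f x y ^ 2 + f y z ^ 2 + f z x ^ 2 +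
      (f x y * f y z + f x y * f y z) + (f y z * f z x + f y z * f z x) +
      (f x y * f z x + f x y * f z x) := fun x y z => by ring
    have q1 : ∑ x ∈ C, ∑ y ∈ C, ∑ z ∈ C, f z x ^ 2 = C.card * S := by
      rw [← hSc, mul_sum]
      refine sum_congr rfl fun x _ => ?_
      rw [sum_const, nsmul_eq_mul]
    have q2 : ∑ x ∈ C, ∑ y ∈ C, ∑ z ∈ C, f y z ^ 2 = C.card * S := by
      rw [sum_const, nsmul_eq_mul]
    have q3 : ∑ x ∈ C, ∑ y ∈ C, ∑ z ∈ C, f x y ^ 2 = C.card * S := by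
      simp only [sum_const, nsmul_eq_mul, ← mul_sum, hS]
    have p1 : ∑ x ∈ C, ∑ y ∈ C, ∑ z ∈ C, f x y * f y z = - ∑ u ∈ C, d u ^ 2 := by
      rw [sum_comm, ← sum_neg_distrib]
      refine sum_congr rfl fun y _ => ?_
      simp only [← mul_sum, ← sum_mul, hd']
      show - d y * d y = _
      ring
    have p2 : ∑ x ∈ C, ∑ y ∈ C, ∑ z ∈ C, f y z * f z x = - ∑ u ∈ C, d u ^ 2 := by
      rw [← p1]
      have : ∀ x ∈ C, ∑ y ∈ C, ∑ z ∈ C, f y z * f z x = ∑ z ∈ C, ∑ y ∈ C, f y z * f z x :=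
        fun x _ => sum_comm
      rw [sum_congr rfl this, sum_comm, sum_comm]
      rw [p1, sum_comm, ← sum_neg_distrib]
      refine sum_congr rfl fun z _ => ?_
      rw [sum_comm]
      simp only [← mul_sum, ← sum_mul, hd']
      show - d z * d z = _
      ring
    have p3 : ∑ x ∈ C, ∑ y ∈ C, ∑ z ∈ C, f x y * f z x = - ∑ u ∈ C, d u ^ 2 := by
      rw [← sum_neg_distrib]
      refine sum_congr rfl fun x _ => ?_
      simp only [← mul_sum, ← sum_mul, hd']
      show d x * - d x = _
      ring
    simp only [e, sum_add_distrib]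
    rw [q1, q2, q3, p1, p2, p3]; ring
  have h2 : ∀ i ∈ B, ∑ u ∈ C, ∑ w ∈ C, (f i u + f u w + f w i) ^ 2 =
      S + 2 * C.card * ∑ u ∈ C, f i u ^ 2 + 4 * ∑ u ∈ C, f i u * d u := by
    intro i hi
    have e : ∀ u w, (f i u + f u w + f w i) ^ 2 = f i u ^ 2 + f u w ^ 2 + f i w ^ 2 +
      (f i u * f u w + f i u * f u w) - (f i w * f u w + f i w * f u w) -
      (f i u * f i w + f i u * f i w) := fun u w => by
        rw [hf w i]; ring
    have q1 : ∑ u ∈ C, ∑ w ∈ C, f i u ^ 2 = C.card * ∑ u ∈ C, f i u ^ 2 := by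
      simp only [sum_const, nsmul_eq_mul, ← mul_sum]
    have q2 : ∑ u ∈ C, ∑ w ∈ C, f i w ^ 2 = C.card * ∑ u ∈ C, f i u ^ 2 := by
      rw [sum_const, nsmul_eq_mul]
    have p1 : ∑ u ∈ C, ∑ w ∈ C, f i u * f u w = ∑ u ∈ C, f i u * d u := by
      simp only [← mul_sum, hd]
    have p2 : ∑ u ∈ C, ∑ w ∈ C, f i w * f u w = - ∑ u ∈ C, f i u * d u := by
      rw [sum_comm]
      simp only [← mul_sum, hd', mul_neg, sum_neg_distrib]
    have p3 : ∑ u ∈ C, ∑ w ∈ C, f i u * f i w = 0 := by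
      simp only [← mul_sum, hB i hi, mul_zero, sum_const_zero]
    simp only [e, sum_add_distrib, sum_sub_distrib]
    rw [q1, q2, p1, p2, p3]; ring
  have h4 : ∑ i ∈ B, ∑ u ∈ C, f i u * d u = ∑ u ∈ C, d u ^ 2 := by
    rw [sum_comm]
    refine sum_congr rfl fun u hu => ?_
    have := hC u hu
    have h5 : ∑ i ∈ B, f i u = d u := by
      have : ∑ i ∈ B, f i u = - ∑ i ∈ B, f u i := by
        rw [← sum_neg_distrib]; exact sum_congr rfl fun w _ => hf _ _
      have h6 : d u = ∑ w ∈ C, f u w := rfl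
      linarith
    rw [← sum_mul, h5]; ring
  have hd0 : 0 ≤ ∑ u ∈ C, d u ^ 2 := sum_nonneg fun _ _ => sq_nonneg _
  have h7 : ∑ i ∈ B, (∑ u ∈ C, ∑ w ∈ C, (f i u + f u w + f w i) ^ 2) / 2 =
      B.card * S / 2 + C.card * ∑ i ∈ B, ∑ u ∈ C, f i u ^ 2 + 2 * ∑ u ∈ C, d u ^ 2 := by
    rw [← h4, ← sum_div, sum_congr rfl h2]
    simp only [sum_add_distrib, ← mul_sum, sum_const, nsmul_eq_mul]
    ring
  rw [h3, h7]
  have : 0 ≤ (B.card : ℝ) * S := mul_nonneg (Nat.cast_nonneg _) hS0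
  nlinarith

lemma rep_odd (k R : ℕ) (hk : 1 ≤ k) (hR : (2 * k + 1) * (3 * k ^ 2 + 4 * k) ≤ R) :
    ∃ x z y, R = k * (2 * k + 1) * x + (k + 1) * (2 * k + 1) * z + (2 * k ^ 2 + 5 * k + 3) * y := by
  have hQ : 3 * k ^ 2 + 4 * k ≤ R / (2 * k + 1) := by
    rw [Nat.le_div_iff_mul_le (by omega)]; linarith
  have hdiv := Nat.div_add_mod R (2 * k + 1)
  have hy : R % (2 * k + 1) < 2 * k + 1 := Nat.mod_lt _ (by omega)
  generalize R / (2 * k + 1) = Q at *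
  generalize R % (2 * k + 1) = y at *
  have h1 : y * (k + 2) + k ^ 2 ≤ Q := by nlinarith
  obtain ⟨N, hN⟩ := Nat.exists_eq_add_of_le h1
  have hd2 := Nat.div_add_mod N k
  have hρ : N % k < k := Nat.mod_lt _ (by omega)
  generalize N / k = q at *
  generalize N % k = ρ at *
  obtain ⟨s, hs⟩ := Nat.exists_eq_add_of_le hρ.le
  refine ⟨q + s, ρ, y, ?_⟩
  have : Q = y * (k + 2) + k * (q + s) + (k + 1) * ρ := by
    rw [hN, ← hd2]
    have : k ^ 2 = k * (ρ + s) := by rw [← hs]; ring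
    rw [this]; ring
  rw [← hdiv, this]; ring

lemma rep_even (m R : ℕ) (hR : (m + 1) * (6 * (m + 1) ^ 2 + 3 * (m + 1)) ≤ R) :
    ∃ x z y, R = (m + 1) * (2 * m + 1) * x + (m + 1) * (2 * m + 3) * z +
      (2 * (m + 1) ^ 2 + 3 * (m + 1) + 1) * y := by
  have hQ : 6 * (m + 1) ^ 2 + 3 * (m + 1) ≤ R / (m + 1) := by
    rw [Nat.le_div_iff_mul_le (by omega)]; linarith
  have hdiv := Nat.div_add_mod R (m + 1)
  have hy : R % (m + 1) < m + 1 := Nat.mod_lt _ (by omega)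
  generalize R / (m + 1) = Q at *
  generalize R % (m + 1) = y at *
  have h1 : y * (2 * m + 5) + (2 * m + 1) * (2 * m + 1) ≤ Q := by nlinarith
  obtain ⟨N, hN⟩ := Nat.exists_eq_add_of_le h1
  have hd2 := Nat.div_add_mod N (2 * m + 1)
  have hρ : N % (2 * m + 1) < 2 * m + 1 := Nat.mod_lt _ (by omega)
  generalize N / (2 * m + 1) = q at *
  generalize N % (2 * m + 1) = ρ at *
  rcases Nat.even_or_odd' ρ with ⟨r, hr | hr⟩
  · refine ⟨q + (2 * m + 1 - r), r, y, ?_⟩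
    obtain ⟨s, hs⟩ := Nat.exists_eq_add_of_le (show r ≤ 2 * m + 1 by omega)
    have e : 2 * m + 1 - r = s := by omega
    have : Q = y * (2 * m + 5) + (2 * m + 1) * (q + s) + (2 * m + 3) * r := by
      rw [hN, ← hd2, hr]
      have : (2 * m + 1) * (2 * m + 1) = (2 * m + 1) * (r + s) := by rw [← hs]
      rw [this]; ring
    rw [← hdiv, this, e]; ring
  · refine ⟨q + (m - 1 - r), m + 1 + r, y, ?_⟩
    obtain ⟨s, hs⟩ := Nat.exists_eq_add_of_le (show r + 1 ≤ m by omega)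
    have e : m - 1 - r = s := by omega
    have : Q = y * (2 * m + 5) + (2 * m + 1) * (q + s) + (2 * m + 3) * (m + 1 + r) := by
      rw [hN, ← hd2, hr, hs]
      ring
    rw [← hdiv, this, e]; ring

lemma rep (a t : ℕ) (ha : 3 ≤ a) (ht : 2 * a ^ 3 + 2 * a ^ 2 + 1 ≤ t) :
    ∃ b : Fin 3 → ℕ,
      ∑ j : Fin 3, ((a + j).choose 3 + b j * (a + j).choose 2) = t := by
  have c31 : (a + 1).choose 3 = a.choose 2 + a.choose 3 := Nat.choose_succ_succ _ _
  have c21 : (a + 1).choose 2 = a + a.choose 2 := by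
    rw [show (a + 1).choose 2 = a.choose 1 + a.choose 2 from Nat.choose_succ_succ _ _,
      Nat.choose_one_right]
  have c32 : (a + 2).choose 3 = (a + 1).choose 2 + (a + 1).choose 3 := Nat.choose_succ_succ _ _
  have c22 : (a + 2).choose 2 = (a + 1) + (a + 1).choose 2 := by
    rw [show (a + 2).choose 2 = (a + 1).choose 1 + (a + 1).choose 2 from Nat.choose_succ_succ _ _,
      Nat.choose_one_right]
  have e2 : a.choose 2 * 2 = a * (a - 1) := by
    have := Nat.choose_succ_right_eq a 1
    rwa [Nat.choose_one_right] at this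
  have e3 : a.choose 3 * 3 = a.choose 2 * (a - 2) := Nat.choose_succ_right_eq a 2
  have key : ∃ x z y, t = (a.choose 3 * 3 + 3 * a.choose 2 + a) +
      (a.choose 2 * x + (a + 1).choose 2 * z + (a + 2).choose 2 * y) := by
    rcases Nat.even_or_odd' a with ⟨k, hk | hk⟩
    · obtain ⟨m, rfl⟩ : ∃ m, k = m + 1 := ⟨k - 1, by omega⟩
      have d2 : a.choose 2 = (m + 1) * (2 * m + 1) := by
        rw [show a - 1 = 2 * m + 1 by omega, hk] at e2
        rw [hk]; linarith
      have d3 : a.choose 3 * 3 = (m + 1) * (2 * m + 1) * (2 * m) := by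
        rw [e3, d2, show a - 2 = 2 * m by omega]
      rw [c22, c21, d3, d2, hk]
      rw [hk] at ht
      obtain ⟨R, hR⟩ := Nat.exists_eq_add_of_le
        (show (m + 1) * (2 * m + 1) * (2 * m) + 3 * ((m + 1) * (2 * m + 1)) + 2 * (m + 1) ≤ t by
          refine le_trans ?_ ht; ring_nf; nlinarith)
      obtain ⟨x, z, y, h⟩ := rep_even m R (by
        have : (m + 1) * (6 * (m + 1) ^ 2 + 3 * (m + 1)) +
          ((m + 1) * (2 * m + 1) * (2 * m) + 3 * ((m + 1) * (2 * m + 1)) + 2 * (m + 1)) ≤ t := by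
          refine le_trans ?_ ht; ring_nf; nlinarith
        omega)
      refine ⟨x, z, y, ?_⟩
      rw [hR, h]; ring
    · have d2 : a.choose 2 = k * (2 * k + 1) := by
        rw [show a - 1 = 2 * k by omega, hk] at e2
        rw [hk]; linarith
      obtain ⟨m, rfl⟩ : ∃ m, k = m + 1 := ⟨k - 1, by omega⟩
      have d3 : a.choose 3 * 3 = (m + 1) * (2 * (m + 1) + 1) * (2 * m + 1) := by
        rw [e3, d2, show a - 2 = 2 * m + 1 by omega]
      rw [c22, c21, d3, d2, hk]
      rw [hk] at ht
      obtain ⟨R, hR⟩ := Nat.exists_eq_add_of_le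
        (show (m + 1) * (2 * (m + 1) + 1) * (2 * m + 1) + 3 * ((m + 1) * (2 * (m + 1) + 1)) +
          (2 * (m + 1) + 1) ≤ t by
          refine le_trans ?_ ht; ring_nf; nlinarith)
      obtain ⟨x, z, y, h⟩ := rep_odd (m + 1) R (by omega) (by
        have : (2 * (m + 1) + 1) * (3 * (m + 1) ^ 2 + 4 * (m + 1)) +
          ((m + 1) * (2 * (m + 1) + 1) * (2 * m + 1) + 3 * ((m + 1) * (2 * (m + 1) + 1)) +
          (2 * (m + 1) + 1)) ≤ t := by
          refine le_trans ?_ ht; ring_nf; nlinarith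
        omega)
      refine ⟨x, z, y, ?_⟩
      rw [hR, h]; ring
  obtain ⟨x, z, y, h⟩ := key
  refine ⟨![x, z, y], ?_⟩
  rw [Fin.sum_univ_three]
  simp only [Fin.val_zero, Fin.val_one, Fin.val_two, add_zero, Matrix.cons_val_zero,
    Matrix.cons_val_one, Matrix.cons_val]
  rw [h, c32, c31, c21]; ring

/-- The triangle family of `K_C ∨ (isolated vertices B)`. -/
def piece (C B : Finset ℕ) : Finset (Finset ℕ) :=
  C.powersetCard 3 ∪ B.biUnion (fun i => (C.powersetCard 2).image (fun p => insert i p))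

lemma sum_piece {M : Type*} [AddCommMonoid M] (C B : Finset ℕ) (h : Disjoint C B)
    (g : Finset ℕ → M) :
    ∑ T ∈ piece C B, g T = ∑ T ∈ C.powersetCard 3, g T +
      ∑ i ∈ B, ∑ p ∈ C.powersetCard 2, g (insert i p) := by
  have hn : ∀ i ∈ B, ∀ k, ∀ p ∈ C.powersetCard k, i ∉ p := fun i hi k p hp hip =>
    disjoint_left.1 h ((mem_powersetCard.1 hp).1 hip) hi
  unfold piece
  rw [sum_union, sum_biUnion]
  · congr 1
    refine sum_congr rfl fun i hi => ?_
    rw [sum_image]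
    intro p hp q hq hpq
    rw [← erase_insert (hn i hi 2 p hp), ← erase_insert (hn i hi 2 q hq)]
    exact congrArg (fun s => erase s i) hpq
  · intro i hi j hj hij
    show Disjoint _ _
    rw [disjoint_left]
    intro T hT hT'
    obtain ⟨p, hp, rfl⟩ := mem_image.1 hT
    obtain ⟨q, hq, hpq⟩ := mem_image.1 hT'
    have : i ∈ insert j q := by rw [hpq]; exact mem_insert_self _ _
    rcases mem_insert.1 this with h1 | h1
    · exact hij h1
    · exact hn i hi 2 q hq h1
  · rw [disjoint_left]
    intro T hT hT'
    obtain ⟨i, hi, hT'⟩ := mem_biUnion.1 hT'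
    obtain ⟨p, hp, rfl⟩ := mem_image.1 hT'
    exact hn i hi 3 _ hT (mem_insert_self _ _)

lemma piece_card (C B : Finset ℕ) (h : Disjoint C B) :
    (piece C B).card = C.card.choose 3 + B.card * C.card.choose 2 := by
  rw [card_eq_sum_ones, sum_piece C B h]
  simp

lemma piece_three (C B : Finset ℕ) (h : Disjoint C B) (T : Finset ℕ) (hT : T ∈ piece C B) :
    T.card = 3 := by
  unfold piece at hT
  rcases mem_union.1 hT with hT | hT
  · exact (mem_powersetCard.1 hT).2
  · obtain ⟨i, hi, hT⟩ := mem_biUnion.1 hT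
    obtain ⟨p, hp, rfl⟩ := mem_image.1 hT
    rw [card_insert_of_notMem, (mem_powersetCard.1 hp).2]
    exact fun hip => disjoint_left.1 h ((mem_powersetCard.1 hp).1 hip) hi

lemma piece_edge (C B : Finset ℕ) (T : Finset ℕ) (hT : T ∈ piece C B) (x y : ℕ)
    (hx : x ∈ T) (hy : y ∈ T) (hxy : x ≠ y) :
    (x ∈ C ∧ y ∈ C) ∨ (x ∈ C ∧ y ∈ B) ∨ (x ∈ B ∧ y ∈ C) := by
  unfold piece at hT
  rcases mem_union.1 hT with hT | hT
  · exact Or.inl ⟨(mem_powersetCard.1 hT).1 hx, (mem_powersetCard.1 hT).1 hy⟩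
  · obtain ⟨i, hi, hT⟩ := mem_biUnion.1 hT
    obtain ⟨p, hp, rfl⟩ := mem_image.1 hT
    have hp := (mem_powersetCard.1 hp).1
    rcases mem_insert.1 hx with rfl | hx' <;> rcases mem_insert.1 hy with rfl | hy'
    · exact absurd rfl hxy
    · exact Or.inr (Or.inr ⟨hi, hp hy'⟩)
    · exact Or.inr (Or.inl ⟨hp hx', hi⟩)
    · exact Or.inl ⟨hp hx', hp hy'⟩

lemma piece_energy (C B : Finset ℕ) (h : Disjoint C B) (V : Finset ℕ → ℝ)
    (hB : ∀ i ∈ B, ∑ u ∈ C, alt V i u = 0)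
    (hC : ∀ u ∈ C, ∑ w ∈ C, alt V u w + ∑ i ∈ B, alt V u i = 0) :
    (C.card : ℝ) * ((∑ u ∈ C, ∑ w ∈ C, alt V u w ^ 2) / 2 + ∑ i ∈ B, ∑ u ∈ C, alt V i u ^ 2) ≤
      ∑ T ∈ piece C B, dT V T ^ 2 := by
  have h0 : ∀ x, alt V x x = 0 := fun x => by simp [alt]
  refine (core C B (alt V) (alt_anti V) hB hC).trans (le_of_eq ?_)
  rw [sum_piece C B h, sum3 C (fun x y z => (alt V x y + alt V y z + alt V z x) ^ 2)
    (fun T => dT V T ^ 2)]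
  · congr 1
    · ring
    · refine sum_congr rfl fun i hi => ?_
      rw [sum2 C (fun u w => (alt V i u + alt V u w + alt V w i) ^ 2)
        (fun p => dT V (insert i p) ^ 2)]
      · ring
      · intro x y
        rw [alt_anti V i x, alt_anti V x y, alt_anti V y i]; ring
      · intro x
        rw [alt_anti V i x, h0]; ring
      · intro x hx y hy hxy
        exact dT_sq V i x y (by rintro rfl; exact disjoint_left.1 h hx hi)
          (by rintro rfl; exact disjoint_left.1 h hy hi) hxy
  · intro x y z
    rw [alt_anti V x y, alt_anti V y z, alt_anti V z x]; ring
  · intro x y z; ring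
  · intro x y
    rw [alt_anti V x y, h0]; ring
  · intro x _ y _ z _ hxy hxz hyz
    exact dT_sq V x y z hxy hxz hyz

lemma extend (F : Finset (Finset ℕ)) (v : {e // e ∈ edgesOf F} → ℝ) :
    ∃ V : Finset ℕ → ℝ, v = (fun e => V e.1) ∧ ∀ e, e ∉ edgesOf F → V e = 0 := by
  refine ⟨fun e => if h : e ∈ edgesOf F then v ⟨e, h⟩ else 0, ?_, ?_⟩
  · ext e; simp
  · intro e he; simp [he]

lemma norm_pos (F : Finset (Finset ℕ)) (V : Finset ℕ → ℝ)
    (h : (fun e : {e // e ∈ edgesOf F} => V e.1) ≠ 0) : 0 < ∑ e ∈ edgesOf F, V e * V e := by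
  obtain ⟨e, he⟩ := Function.ne_iff.1 h
  refine sum_pos' (fun _ _ => mul_self_nonneg _) ⟨e.1, e.2, ?_⟩
  exact mul_self_pos.2 he

lemma eig_le (F : Finset (Finset ℕ)) (hF : IsTriFam F) (μ : ℝ) (v : {e // e ∈ edgesOf F} → ℝ)
    (hv : v ≠ 0) (h : ((delta1 F)ᵀ * delta1 F).mulVec v = μ • v) : μ ≤ 9 * F.card := by
  obtain ⟨V, rfl, hV⟩ := extend F v
  have hp := norm_pos F V hv
  have he := energy F V V μ h
  set N := ∑ e ∈ edgesOf F, V e * V e with hN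
  have hle : ∀ e, V e * V e ≤ N := by
    intro e
    by_cases h : e ∈ edgesOf F
    · exact single_le_sum (f := fun e => V e * V e) (fun _ _ => mul_self_nonneg _) h
    · rw [hV e h]; simpa using hp.le
  have : ∑ T ∈ F, dT V T * dT V T ≤ ∑ T ∈ F, 9 * N := by
    refine sum_le_sum fun T hT => ?_
    obtain ⟨a, b, c, hab, hbc, rfl⟩ := exists_sorted T (hF.2 T hT)
    rw [dT_sorted V a b c hab hbc]
    have h1 := hle {a, b}
    have h2 := hle {a, c}
    have h3 := hle {b, c}
    nlinarith [sq_nonneg (V {a, b} + V {a, c}), sq_nonneg (V {a, b} - V {b, c}),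
      sq_nonneg (V {a, c} + V {b, c})]
  rw [sum_const, nsmul_eq_mul, ← he] at this
  by_contra hcon
  push Not at hcon
  nlinarith

lemma exists_eig (F : Finset (Finset ℕ)) (hF : IsTriFam F) :
    ∃ μ : ℝ, 0 < μ ∧ ∃ v : {e // e ∈ edgesOf F} → ℝ, v ≠ 0 ∧
      ((delta1 F)ᵀ * delta1 F).mulVec v = μ • v := by
  have hps : ((delta1 F)ᵀ * delta1 F).PosSemidef := by
    have := Matrix.posSemidef_conjTranspose_mul_self (delta1 F)
    rwa [Matrix.conjTranspose_eq_transpose_of_trivial] at this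
  have hne : ((delta1 F)ᵀ * delta1 F) ≠ 0 := by
    intro h0
    obtain ⟨T, hT⟩ := hF.1
    obtain ⟨a, b, c, hab, hbc, rfl⟩ := exists_sorted T (hF.2 T hT)
    let U : Finset ℕ → ℝ := fun e => if e = {a, b} then 1 else 0
    have he := energy F U U 0 (by rw [h0]; simp)
    rw [zero_mul] at he
    have h1 : dT U {a, b, c} = 1 := by
      rw [dT_sorted U a b c hab hbc]
      have n1 : ({a, c} : Finset ℕ) ≠ {a, b} := by
        intro h
        have : c ∈ ({a, b} : Finset ℕ) := h ▸ (by simp)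
        simp at this; omega
      have n2 : ({b, c} : Finset ℕ) ≠ {a, b} := by
        intro h
        have : c ∈ ({a, b} : Finset ℕ) := h ▸ (by simp)
        simp at this; omega
      simp [U, n1, n2]
    have := single_le_sum (f := fun T => dT U T * dT U T) (fun _ _ => mul_self_nonneg _) hT
    simp only [h1] at this
    linarith
  have hev : hps.isHermitian.eigenvalues ≠ 0 := fun h =>
    hne (hps.isHermitian.eigenvalues_eq_zero_iff.1 h)
  obtain ⟨i, hi⟩ := Function.ne_iff.1 hev
  refine ⟨hps.isHermitian.eigenvalues i, lt_of_le_of_ne (hps.eigenvalues_nonneg i) (Ne.symm hi),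
    ⇑(hps.isHermitian.eigenvectorBasis i), ?_, hps.isHermitian.mulVec_eigenvectorBasis i⟩
  intro h
  have h1 : hps.isHermitian.eigenvectorBasis i = 0 := by
    ext j; exact congrFun h j
  have h2 := hps.isHermitian.eigenvectorBasis.orthonormal.1 i
  rw [h1] at h2
  simp at h2

lemma phi_ge (F : Finset (Finset ℕ)) (hF : IsTriFam F) (a : ℝ)
    (h : ∀ μ : ℝ, 0 < μ → ∀ v : {e // e ∈ edgesOf F} → ℝ, v ≠ 0 →
      ((delta1 F)ᵀ * delta1 F).mulVec v = μ • v → a ≤ μ) : a ≤ phi F.card := by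
  have h1 : a ≤ lam F := by
    refine le_csInf (exists_eig F hF) ?_
    rintro μ ⟨hμ, v, hv, he⟩
    exact h μ hμ v hv he
  refine h1.trans (le_csSup ⟨9 * F.card, ?_⟩ ⟨F, hF, rfl, rfl⟩)
  rintro r ⟨G, hG, hc, rfl⟩
  obtain ⟨μ, hμ, v, hv, he⟩ := exists_eig G hG
  rw [← hc]
  refine le_trans (csInf_le ⟨0, ?_⟩ ⟨hμ, v, hv, he⟩) (eig_le G hG μ v hv he)
  rintro x ⟨hx, _⟩
  exact hx.le

lemma div_free (F : Finset (Finset ℕ)) (hF : IsTriFam F) (V : Finset ℕ → ℝ) (μ : ℝ) (hμ : 0 < μ)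
    (hV : ∀ e, e ∉ edgesOf F → V e = 0)
    (h : ((delta1 F)ᵀ * delta1 F).mulVec (fun e => V e.1) = μ • (fun e => V e.1))
    (W : Finset ℕ) (hW : edgesOf F ⊆ W.powersetCard 2) (x : ℕ) (hx : x ∈ W) :
    ∑ y ∈ W, alt V x y = 0 := by
  let ψ : ℕ → ℝ := fun y => if y = x then 1 else 0
  let U : Finset ℕ → ℝ := fun e =>
    if h : e.Nonempty then ψ (e.max' h) - ψ (e.min' h) else 0
  have hU : ∀ p q, p < q → U {p, q} = ψ q - ψ p := by
    intro p q hpq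
    have e1 : ∀ h, ({p, q} : Finset ℕ).max' h = q := fun h =>
      (Finset.max'_eq_iff _ _ _).2 ⟨by simp, by simp [hpq.le]⟩
    have e2 : ∀ h, ({p, q} : Finset ℕ).min' h = p := fun h =>
      (Finset.min'_eq_iff _ _ _).2 ⟨by simp, by simp [hpq.le]⟩
    simp [U, e1, e2]
  have he := energy F U V μ h
  have hz : ∑ T ∈ F, dT U T * dT V T = 0 :=
    sum_eq_zero fun T hT => by rw [dT_exact ψ U hU T (hF.2 T hT), zero_mul]
  rw [hz] at he
  have h1 : ∑ e ∈ edgesOf F, U e * V e = 0 := by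
    rcases mul_eq_zero.1 he with h | h
    · exact absurd h hμ.ne'
    · exact h
  have h2 : ∑ e ∈ W.powersetCard 2, U e * V e = 0 := by
    rw [← h1]; symm
    exact sum_subset hW fun e _ he => by rw [hV e he, mul_zero]
  have h3 := sum2 W (fun p q => (ψ q - ψ p) * alt V p q) (fun e => U e * V e)
    (fun p q => by rw [alt_anti V p q]; ring) (fun p => by simp)
    (by
      intro p _ q _ hpq
      rcases lt_or_gt_of_ne hpq with hl | hl
      · simp only [hU p q hl, alt, if_pos hl]
      · simp only [alt, if_neg hl.not_gt, if_pos hl]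
        rw [Finset.pair_comm, hU q p hl]; ring)
  rw [h2, mul_zero] at h3
  have h4 : ∑ p ∈ W, ∑ q ∈ W, ψ p * alt V p q = ∑ y ∈ W, alt V x y := by
    simp only [← mul_sum]
    simp only [ψ, ite_mul, one_mul, zero_mul, sum_ite_eq', hx, if_true]
  have h5 : ∑ p ∈ W, ∑ q ∈ W, ψ q * alt V p q = - ∑ p ∈ W, ∑ q ∈ W, ψ p * alt V p q := by
    rw [sum_comm, ← sum_neg_distrib]
    refine sum_congr rfl fun p _ => ?_
    rw [← sum_neg_distrib]
    refine sum_congr rfl fun q _ => ?_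
    rw [alt_anti V q p]; ring
  simp only [sub_mul, sum_sub_distrib] at h3
  rw [h5, h4] at h3
  linarith

lemma main_bound (C B : Fin 3 → Finset ℕ) (hCB : ∀ j, Disjoint (C j) (B j))
    (hd : ∀ j k, j ≠ k → Disjoint (C j ∪ B j) (C k ∪ B k)) (a : ℕ) (ha : ∀ j, a ≤ (C j).card)
    (F : Finset (Finset ℕ)) (hFdef : F = univ.biUnion fun j => piece (C j) (B j))
    (hF : IsTriFam F) (μ : ℝ) (hμ : 0 < μ)
    (hs : ∀ g : Finset ℕ → ℝ, ∑ T ∈ F, g T = ∑ j, ∑ T ∈ piece (C j) (B j), g T)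
    (v : {e // e ∈ edgesOf F} → ℝ) (hv : v ≠ 0)
    (h : ((delta1 F)ᵀ * delta1 F).mulVec v = μ • v) : (a : ℝ) ≤ μ := by
  obtain ⟨V, rfl, hV⟩ := extend F v
  have hp := norm_pos F V hv
  have he := energy F V V μ h
  set W : Finset ℕ := univ.biUnion fun j => C j ∪ B j with hWdef
  have hedge : ∀ x y, x ≠ y → ({x, y} : Finset ℕ) ∈ edgesOf F →
      ∃ j, (x ∈ C j ∧ y ∈ C j) ∨ (x ∈ C j ∧ y ∈ B j) ∨ (x ∈ B j ∧ y ∈ C j) := by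
    intro x y hxy hxyE
    obtain ⟨T, hT, hm⟩ := mem_biUnion.1 hxyE
    rw [hFdef] at hT
    obtain ⟨j, _, hT⟩ := mem_biUnion.1 hT
    have hsub := (mem_powersetCard.1 hm).1
    exact ⟨j, piece_edge _ _ T hT x y (hsub (by simp)) (hsub (by simp)) hxy⟩
  have hW : edgesOf F ⊆ W.powersetCard 2 := by
    intro e hE
    obtain ⟨T, hT, hm⟩ := mem_biUnion.1 hE
    have hc := (mem_powersetCard.1 hm).2
    obtain ⟨x, y, hxy, rfl⟩ := card_eq_two.1 hc
    refine mem_powersetCard.2 ⟨?_, hc⟩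
    obtain ⟨j, hj⟩ := hedge x y hxy hE
    have : x ∈ C j ∪ B j ∧ y ∈ C j ∪ B j := by
      simp only [mem_union]; tauto
    intro z hz
    refine mem_biUnion.2 ⟨j, mem_univ _, ?_⟩
    rcases mem_insert.1 hz with rfl | hz
    · exact this.1
    · rw [mem_singleton.1 hz]; exact this.2
  have hsub : ∀ j, C j ∪ B j ⊆ W := fun j => subset_biUnion_of_mem (fun j => C j ∪ B j) (mem_univ j)
  have hdiv := div_free F hF V μ hμ hV h W hW
  have hsupp : ∀ x y, alt V x y ≠ 0 →
      ∃ j, (x ∈ C j ∧ y ∈ C j) ∨ (x ∈ C j ∧ y ∈ B j) ∨ (x ∈ B j ∧ y ∈ C j) := by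
    intro x y hne
    have hxy : x ≠ y := by rintro rfl; exact hne (by simp [alt])
    apply hedge x y hxy
    by_contra hE
    apply hne
    unfold alt
    rw [hV _ hE]; simp
  have huniq : ∀ j k x, x ∈ C j ∪ B j → x ∈ C k ∪ B k → j = k := by
    intro j k x hj hk
    by_contra hjk
    exact disjoint_left.1 (hd j k hjk) hj hk
  have rB : ∀ j, ∀ i ∈ B j, ∀ g : ℝ → ℝ, g 0 = 0 →
      ∑ y ∈ W, g (alt V i y) = ∑ u ∈ C j, g (alt V i u) := by
    intro j i hi g hg
    symm
    refine sum_subset (subset_union_left.trans (hsub j)) fun y _ hy => ?_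
    by_cases hz : alt V i y = 0
    · rw [hz, hg]
    · obtain ⟨k, hk⟩ := hsupp i y hz
      have : j = k := huniq j k i (mem_union_right _ hi) (by simp only [mem_union]; tauto)
      subst this
      have : i ∉ C j := fun h => disjoint_left.1 (hCB j) h hi
      tauto
  have rC : ∀ j, ∀ u ∈ C j, ∀ g : ℝ → ℝ, g 0 = 0 →
      ∑ y ∈ W, g (alt V u y) = ∑ w ∈ C j, g (alt V u w) + ∑ i ∈ B j, g (alt V u i) := by
    intro j u hu g hg
    rw [← sum_union (hCB j)]
    symm
    refine sum_subset (hsub j) fun y _ hy => ?_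
    by_cases hz : alt V u y = 0
    · rw [hz, hg]
    · obtain ⟨k, hk⟩ := hsupp u y hz
      have : j = k := huniq j k u (mem_union_left _ hu) (by simp only [mem_union]; tauto)
      subst this
      rw [mem_union] at hy
      tauto
  have hen : ∀ j, (a : ℝ) * ((∑ u ∈ C j, ∑ w ∈ C j, alt V u w ^ 2) / 2 +
      ∑ i ∈ B j, ∑ u ∈ C j, alt V i u ^ 2) ≤ ∑ T ∈ piece (C j) (B j), dT V T ^ 2 := by
    intro j
    refine le_trans ?_ (piece_energy (C j) (B j) (hCB j) V ?_ ?_)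
    · refine mul_le_mul_of_nonneg_right (by exact_mod_cast ha j) ?_
      have h1 : 0 ≤ ∑ u ∈ C j, ∑ w ∈ C j, alt V u w ^ 2 :=
        sum_nonneg fun _ _ => sum_nonneg fun _ _ => sq_nonneg _
      have h2 : 0 ≤ ∑ i ∈ B j, ∑ u ∈ C j, alt V i u ^ 2 :=
        sum_nonneg fun _ _ => sum_nonneg fun _ _ => sq_nonneg _
      linarith
    · intro i hi
      rw [← hdiv i (hsub j (mem_union_right _ hi))]
      exact (rB j i hi id rfl).symm
    · intro u hu
      rw [← hdiv u (hsub j (mem_union_left _ hu))]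
      exact (rC j u hu id rfl).symm
  have hnorm : ∑ e ∈ edgesOf F, V e * V e = ∑ j, ((∑ u ∈ C j, ∑ w ∈ C j, alt V u w ^ 2) / 2 +
      ∑ i ∈ B j, ∑ u ∈ C j, alt V i u ^ 2) := by
    have h1 : ∑ e ∈ edgesOf F, V e * V e = ∑ e ∈ W.powersetCard 2, V e ^ 2 := by
      rw [sum_congr rfl fun e _ => (sq (V e)).symm]
      exact sum_subset hW fun e _ he => by rw [hV e he]; simp
    have h2 := sum2 W (fun x y => alt V x y ^ 2) (fun e => V e ^ 2)
      (fun x y => by rw [alt_anti V x y]; ring) (fun x => by simp [alt])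
      (fun x _ y _ hxy => (alt_sq V x y hxy).symm)
    have h3 : ∑ x ∈ W, ∑ y ∈ W, alt V x y ^ 2 = ∑ j, (∑ u ∈ C j, ∑ w ∈ C j, alt V u w ^ 2 +
        2 * ∑ i ∈ B j, ∑ u ∈ C j, alt V i u ^ 2) := by
      rw [hWdef, sum_biUnion (fun j _ k _ hjk => hd j k hjk), ← hWdef]
      refine sum_congr rfl fun j _ => ?_
      rw [sum_union (hCB j), sum_congr rfl fun u hu => rC j u hu (fun r => r ^ 2) (by simp),
        sum_congr rfl fun i hi => rB j i hi (fun r => r ^ 2) (by simp), sum_add_distrib]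
      have : ∑ u ∈ C j, ∑ i ∈ B j, alt V u i ^ 2 = ∑ i ∈ B j, ∑ u ∈ C j, alt V i u ^ 2 := by
        rw [sum_comm]
        refine sum_congr rfl fun i _ => sum_congr rfl fun u _ => ?_
        rw [alt_anti V u i]; ring
      rw [this]; ring
    rw [h1]
    have h4 : ∑ e ∈ W.powersetCard 2, V e ^ 2 = (∑ x ∈ W, ∑ y ∈ W, alt V x y ^ 2) / 2 := by
      rw [h2]; ring
    rw [h4, h3, sum_div]
    refine sum_congr rfl fun j _ => ?_
    ring
  have hfin : (a : ℝ) * ∑ e ∈ edgesOf F, V e * V e ≤ μ * ∑ e ∈ edgesOf F, V e * V e := by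
    rw [he, hs fun T => dT V T * dT V T, hnorm, mul_sum]
    refine sum_le_sum fun j _ => ?_
    refine (hen j).trans (le_of_eq ?_)
    exact sum_congr rfl fun T _ => sq _
  exact le_of_mul_le_mul_right hfin hp

/-- For every `a ≥ 3` and every `t ≥ 2a³ + 2a² + 1`, `φ(t) ≥ a`. -/
theorem stmt18 (a : ℕ) (ha : 3 ≤ a) (t : ℕ) (ht : 2 * a ^ 3 + 2 * a ^ 2 + 1 ≤ t) :
    (a : ℝ) ≤ phi t := by
  obtain ⟨b, hb⟩ := rep a t ha ht
  let C : Fin 3 → Finset ℕ := fun j => (range (a + j)).image fun n => 6 * n + 2 * j.val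
  let B : Fin 3 → Finset ℕ := fun j => (range (b j)).image fun n => 6 * n + 2 * j.val + 1
  have hCc : ∀ j, (C j).card = a + j := fun j => by
    rw [card_image_of_injective, card_range]
    intro x y h; simp only at h; omega
  have hBc : ∀ j, (B j).card = b j := fun j => by
    rw [card_image_of_injective, card_range]
    intro x y h; simp only at h; omega
  have hCB : ∀ j, Disjoint (C j) (B j) := by
    intro j
    rw [disjoint_left]
    intro x h1 h2
    obtain ⟨n, _, hn⟩ := mem_image.1 h1
    obtain ⟨m, _, hm⟩ := mem_image.1 h2
    omega
  have hmod : ∀ j, ∀ x ∈ C j ∪ B j, (x % 6) / 2 = j.val := by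
    intro j x hx
    have := j.isLt
    rcases mem_union.1 hx with h | h
    · obtain ⟨n, _, hn⟩ := mem_image.1 h
      omega
    · obtain ⟨n, _, hn⟩ := mem_image.1 h
      omega
  have hd : ∀ j k, j ≠ k → Disjoint (C j ∪ B j) (C k ∪ B k) := by
    intro j k hjk
    rw [disjoint_left]
    intro x h1 h2
    exact hjk (Fin.ext ((hmod j x h1).symm.trans (hmod k x h2)))
  set F : Finset (Finset ℕ) := univ.biUnion fun j => piece (C j) (B j) with hFdef
  have hpd : ∀ j k, j ≠ k → Disjoint (piece (C j) (B j)) (piece (C k) (B k)) := by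
    intro j k hjk
    rw [disjoint_left]
    intro T h1 h2
    have h3 := piece_three _ _ (hCB j) T h1
    obtain ⟨x, hx, y, hy, hxy⟩ := one_lt_card.1 (show 1 < T.card by omega)
    have e1 := piece_edge _ _ T h1 x y hx hy hxy
    have e2 := piece_edge _ _ T h2 x y hx hy hxy
    have m1 : x ∈ C j ∪ B j := by rw [mem_union]; tauto
    have m2 : x ∈ C k ∪ B k := by rw [mem_union]; tauto
    exact disjoint_left.1 (hd j k hjk) m1 m2
  have hcard : F.card = t := by
    rw [hFdef, card_biUnion (fun j _ k _ hjk => hpd j k hjk), ← hb]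
    refine sum_congr rfl fun j _ => ?_
    rw [piece_card _ _ (hCB j), hCc, hBc]
  have hF : IsTriFam F := by
    refine ⟨?_, ?_⟩
    · rw [← card_pos, hcard]; omega
    · intro T hT
      obtain ⟨j, _, hT⟩ := mem_biUnion.1 hT
      exact piece_three _ _ (hCB j) T hT
  rw [← hcard]
  refine phi_ge F hF a fun μ hμ v hv h => ?_
  refine main_bound C B hCB hd a (fun j => by rw [hCc]; omega) F hFdef hF μ hμ ?_ v hv h
  intro g
  rw [hFdef, sum_biUnion (fun j _ k _ hjk => hpd j k hjk)]
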